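/- arXiv:2208.11768 — 2 statements merged into one kernel-verified Lean document; each statement's English description precedes it below -/
import Mathlib

section
/- Let A be a finite alphabet, let F ⊆ A* be a recurrent language, and let X ⊆ F be a rational bifix code. Then the following conditions are equivalent: (1) X is an F-maximal bifix code; (2) X is left F-complete; (3) X is right F-complete; (4) X is F-complete. -/
/-- A language is factorial if it is closed under taking factors (infixes). -/
def Factorial {A : Type*} (F : Set (List A)) : Prop :=
  ∀ u w : List A, w ∈ F → u <:+: w → u ∈ F

/-- A language is prolongable if every word extends by a letter on both sides. -/
def Prolongable {A : Type*} (F : Set (List A)) : Prop :=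
  ∀ u ∈ F, ∃ a b : A, (a :: u) ∈ F ∧ (u ++ [b]) ∈ F

/-- A subshift language: nonempty, factorial and prolongable. -/
def SubshiftLanguage {A : Type*} (F : Set (List A)) : Prop :=
  F.Nonempty ∧ Factorial F ∧ Prolongable F

/-- A recurrent language. -/
def Recurrent {A : Type*} (F : Set (List A)) : Prop :=
  SubshiftLanguage F ∧ ∀ u ∈ F, ∀ v ∈ F, ∃ w : List A, u ++ w ++ v ∈ F

/-- A uniformly recurrent language. -/
def UniformlyRecurrent {A : Type*} (F : Set (List A)) : Prop :=
  SubshiftLanguage F ∧ ∀ u ∈ F, ∃ N : ℕ, ∀ w ∈ F, N ≤ w.length → u <:+: w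

/-- The Kleene star of a set of words: all concatenations of finitely many elements. -/
def KStarSet {A : Type*} (X : Set (List A)) : Set (List A) :=
  {w | ∃ l : List (List A), (∀ x ∈ l, x ∈ X) ∧ w = l.flatten}

/-- A code: a nonempty set of nonempty words with unique factorization. -/
def IsCode {A : Type*} (X : Set (List A)) : Prop :=
  X.Nonempty ∧ (∀ x ∈ X, x ≠ []) ∧
    ∀ l m : List (List A), (∀ x ∈ l, x ∈ X) → (∀ y ∈ m, y ∈ X) →
      l.flatten = m.flatten → l = m

/-- A prefix code: a nonempty set of nonempty words, none a proper prefix of another. -/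
def PrefixCode {A : Type*} (X : Set (List A)) : Prop :=
  X.Nonempty ∧ (∀ x ∈ X, x ≠ []) ∧ ∀ x ∈ X, ∀ y ∈ X, x <+: y → x = y

/-- A suffix code: a nonempty set of nonempty words, none a proper suffix of another. -/
def SuffixCode {A : Type*} (X : Set (List A)) : Prop :=
  X.Nonempty ∧ (∀ x ∈ X, x ≠ []) ∧ ∀ x ∈ X, ∀ y ∈ X, x <:+ y → x = y

/-- A bifix code is both a prefix code and a suffix code. -/
def BifixCode {A : Type*} (X : Set (List A)) : Prop :=
  PrefixCode X ∧ SuffixCode X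

/-- `X` is right `F`-complete: every element of `F` is a prefix of an element of `X*`. -/
def RightFComplete {A : Type*} (X F : Set (List A)) : Prop :=
  ∀ u ∈ F, ∃ w ∈ KStarSet X, u <+: w

/-- `X` is left `F`-complete: every element of `F` is a suffix of an element of `X*`. -/
def LeftFComplete {A : Type*} (X F : Set (List A)) : Prop :=
  ∀ u ∈ F, ∃ w ∈ KStarSet X, u <:+ w

/-- `X` is `F`-complete: both right and left `F`-complete. -/
def FComplete {A : Type*} (X F : Set (List A)) : Prop :=
  RightFComplete X F ∧ LeftFComplete X F

/-- The decoding map: a word over the alphabet `X` is sent to its concatenation in `A*`. -/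
def decode {A : Type*} (X : Set (List A)) : List ↥X → List A :=
  fun l => (l.map Subtype.val).flatten

/-- A language is rational if it is accepted by a DFA with finitely many states. -/
def IsRational {A : Type*} (L : Set (List A)) : Prop :=
  ∃ (σ : Type) (_ : Fintype σ) (M : DFA A σ), ∀ w : List A, w ∈ M.accepts ↔ w ∈ L

/-- `X` is an `F`-maximal bifix code: a bifix code contained in `F` that is maximal
among bifix codes contained in `F`. -/
def FMaximalBifixCode {A : Type*} (X F : Set (List A)) : Prop :=
  BifixCode X ∧ X ⊆ F ∧ ∀ Y : Set (List A), BifixCode Y → X ⊆ Y → Y ⊆ F → Y = X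

/-!
A bifix code that is right `F`-complete is `F`-maximal, since every word of `F` is then comparable
for the prefix order with a word of `X`. Conversely, if `X` is neither right nor left `F`-complete,
some word of `F` starts with a word prefix-incomparable with `X` and ends with a word
suffix-incomparable with `X`; adding it to `X` gives a larger bifix code.

The two one-sided notions agree as soon as some `w ∈ F` is a factor of no word of `X`. Suppose `X`
is left `F`-complete and `u ∈ F` is prefix-incomparable with `X`. By recurrence there are words
`q₀, q₁, …` beginning with `w`, with `qₙ u ∈ F` and each `qₘ u` a prefix of `qₙ` for `m < n`.
Left completeness writes `qₙ = sₙ xₙ` with `xₙ ∈ X*` and `sₙ` a suffix of a word of `X`, so `sₙ` is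
a prefix of `w` and two of the `sₙ` coincide. Then `xₙ = xₘ u t` for some `t`, and since `X*` is
right unitary, `u t ∈ X*`, which contradicts the choice of `u`.

For rational `X` such a `w` is a word of `F` after which an automaton of `X` has the fewest possible
live states: completing `w` to a word of `X` and reading on kills a state.
-/

section Star

variable {A : Type*} {X : Set (List A)} {u v w x : List A}

theorem nil_mem_kStarSet : [] ∈ KStarSet X :=
  ⟨[], by simp, rfl⟩

theorem mem_kStarSet_of_mem (hx : x ∈ X) : x ∈ KStarSet X :=
  ⟨[x], by simpa using hx, by simp⟩

theorem append_mem_kStarSet (hu : u ∈ KStarSet X) (hv : v ∈ KStarSet X) :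
    u ++ v ∈ KStarSet X := by
  obtain ⟨l, hl, rfl⟩ := hu
  obtain ⟨m, hm, rfl⟩ := hv
  exact ⟨l ++ m, List.forall_mem_append.2 ⟨hl, hm⟩, List.flatten_append.symm⟩

theorem PrefixCode.eq_of_prefix (hX : PrefixCode X) (hu : u ∈ X) (hv : v ∈ X) (huw : u <+: w)
    (hvw : v <+: w) : u = v :=
  (List.prefix_or_prefix_of_prefix huw hvw).elim (hX.2.2 u hu v hv)
    fun h => (hX.2.2 v hv u hu h).symm

theorem PrefixCode.mem_kStarSet_of_append_mem (hX : PrefixCode X) (hu : u ∈ KStarSet X)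
    (huv : u ++ v ∈ KStarSet X) : v ∈ KStarSet X := by
  obtain ⟨l, hl, rfl⟩ := hu
  induction l with
  | nil => exact huv
  | cons x l ih =>
    obtain ⟨hx, hl⟩ := List.forall_mem_cons.1 hl
    obtain ⟨m, hm, hlm⟩ := huv
    cases m with
    | nil =>
      have hx_nil : x = [] := by simp_all
      exact absurd hx_nil (hX.2.1 x hx)
    | cons y m =>
      obtain ⟨hy, hm'⟩ := List.forall_mem_cons.1 hm
      simp only [List.flatten_cons, List.append_assoc] at hlm
      obtain rfl : x = y :=
        hX.eq_of_prefix hx hy (List.prefix_append _ _) ⟨m.flatten, hlm.symm⟩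
      exact ih hl ⟨m, hm', List.append_cancel_left hlm⟩

end Star

section Comparable

variable {A : Type*} {X F : Set (List A)} {u v w : List A}

/-- The word `u` is comparable, for the prefix order, with some word of `X`. -/
def PrefixComparable (X : Set (List A)) (u : List A) : Prop :=
  ∃ x ∈ X, x <+: u ∨ u <+: x

/-- The word `u` is comparable, for the suffix order, with some word of `X`. -/
def SuffixComparable (X : Set (List A)) (u : List A) : Prop :=
  ∃ x ∈ X, x <:+ u ∨ u <:+ x

theorem PrefixComparable.of_prefix (h : PrefixComparable X v) (huv : u <+: v) :
    PrefixComparable X u := by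
  obtain ⟨x, hx, hxv | hvx⟩ := h
  · exact ⟨x, hx, List.prefix_or_prefix_of_prefix hxv huv⟩
  · exact ⟨x, hx, Or.inr (huv.trans hvx)⟩

theorem prefixComparable_of_mem_kStarSet (hX : X.Nonempty) (hw : w ∈ KStarSet X) :
    PrefixComparable X w := by
  obtain ⟨l, hl, rfl⟩ := hw
  cases l with
  | nil => exact hX.imp fun x hx => ⟨hx, Or.inr List.nil_prefix⟩
  | cons x l => exact ⟨x, hl x List.mem_cons_self, Or.inl (List.prefix_append _ _)⟩

theorem exists_kStarSet_append_of_prefixComparable (hF : Factorial F) (hX : ∀ x ∈ X, x ≠ [])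
    (h : ∀ u ∈ F, PrefixComparable X u) (hu : u ∈ F) :
    ∃ w ∈ KStarSet X, ∃ p, u = w ++ p ∧ ∃ x ∈ X, p <+: x := by
  induction hn : u.length using Nat.strong_induction_on generalizing u with
  | _ n ih =>
    obtain ⟨x, hx, ⟨v, rfl⟩ | hux⟩ := h u hu
    · have hlt : v.length < n := by
        have := List.length_pos_iff.2 (hX x hx)
        simp only [List.length_append] at hn
        omega
      have hv : v ∈ F := hF _ _ hu (List.suffix_append x v).isInfix
      obtain ⟨w, hw, p, rfl, hp⟩ := ih _ hlt hv rfl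
      exact ⟨x ++ w, append_mem_kStarSet (mem_kStarSet_of_mem hx) hw, p,
        (List.append_assoc ..).symm, hp⟩
    · exact ⟨[], nil_mem_kStarSet, u, rfl, x, hx, hux⟩

theorem RightFComplete.prefixComparable (h : RightFComplete X F) (hX : X.Nonempty) (hu : u ∈ F) :
    PrefixComparable X u := by
  obtain ⟨w, hw, huw⟩ := h u hu
  exact (prefixComparable_of_mem_kStarSet hX hw).of_prefix huw

theorem PrefixCode.insert (hX : PrefixCode X) (hu : ¬PrefixComparable X u) :
    PrefixCode (insert u X) := by
  have hune : u ≠ [] := by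
    rintro rfl
    exact hu (prefixComparable_of_mem_kStarSet hX.1 nil_mem_kStarSet)
  refine ⟨Set.insert_nonempty u X, Set.forall_mem_insert.2 ⟨hune, hX.2.1⟩, ?_⟩
  rintro x (rfl | hx) y (rfl | hy) hxy
  · rfl
  · exact absurd ⟨y, hy, Or.inr hxy⟩ hu
  · exact absurd ⟨x, hx, Or.inl hxy⟩ hu
  · exact hX.2.2 x hx y hy hxy

end Comparable

/-- `X` is `F`-thin: some word of `F` is a factor of no word of `X`. -/
def FThin {A : Type*} (X F : Set (List A)) : Prop :=
  ∃ w ∈ F, ∀ x ∈ X, ¬w <:+: x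

section Mirror

variable {A : Type*} {X F : Set (List A)} {u w : List A}

/-- The set of reversals of the words of `X`, used to transfer results between the prefix and the
suffix order. -/
def mirror (X : Set (List A)) : Set (List A) :=
  List.reverse ⁻¹' X

@[simp]
theorem mem_mirror : w ∈ mirror X ↔ w.reverse ∈ X :=
  Iff.rfl

@[simp]
theorem mirror_mirror (X : Set (List A)) : mirror (mirror X) = X := by
  ext w
  simp

theorem forall_mem_mirror {p : List A → Prop} :
    (∀ w ∈ mirror X, p w) ↔ ∀ w ∈ X, p w.reverse :=
  List.reverse_surjective.forall.trans (by simp)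

theorem exists_mem_mirror {p : List A → Prop} :
    (∃ w ∈ mirror X, p w) ↔ ∃ w ∈ X, p w.reverse :=
  List.reverse_surjective.exists.trans (by simp)

theorem mirror_nonempty : (mirror X).Nonempty ↔ X.Nonempty :=
  List.reverse_surjective.nonempty_preimage

theorem mirror_insert (u : List A) (X : Set (List A)) :
    mirror (insert u X) = insert u.reverse (mirror X) := by
  ext w
  simp [List.reverse_eq_iff]

theorem reverse_mem_kStarSet_mirror (hw : w ∈ KStarSet X) :
    w.reverse ∈ KStarSet (mirror X) := by
  obtain ⟨l, hl, rfl⟩ := hw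
  refine ⟨(l.map List.reverse).reverse, ?_, List.reverse_flatten⟩
  simpa only [List.mem_reverse, List.forall_mem_map, mem_mirror, List.reverse_reverse] using hl

theorem kStarSet_mirror (X : Set (List A)) : KStarSet (mirror X) = mirror (KStarSet X) := by
  ext w
  refine ⟨fun hw => ?_, fun hw => ?_⟩
  · simpa using reverse_mem_kStarSet_mirror hw
  · simpa using reverse_mem_kStarSet_mirror hw

theorem prefixComparable_mirror :
    PrefixComparable (mirror X) u.reverse ↔ SuffixComparable X u := by
  simp only [PrefixComparable, SuffixComparable, exists_mem_mirror, List.reverse_prefix]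

theorem SuffixComparable.of_suffix (h : SuffixComparable X w) (huw : u <:+ w) :
    SuffixComparable X u :=
  prefixComparable_mirror.1
    ((prefixComparable_mirror.2 h).of_prefix (List.reverse_prefix.2 huw))

theorem prefixCode_mirror : PrefixCode (mirror X) ↔ SuffixCode X := by
  simp only [PrefixCode, SuffixCode, mirror_nonempty, forall_mem_mirror, List.reverse_prefix,
    List.reverse_inj, ne_eq, List.reverse_eq_nil_iff]

theorem suffixCode_mirror : SuffixCode (mirror X) ↔ PrefixCode X := by
  rw [← prefixCode_mirror, mirror_mirror]

theorem BifixCode.mirror (hX : BifixCode X) : BifixCode (mirror X) :=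
  ⟨prefixCode_mirror.2 hX.2, suffixCode_mirror.2 hX.1⟩

theorem rightFComplete_mirror :
    RightFComplete (mirror X) (mirror F) ↔ LeftFComplete X F := by
  simp only [RightFComplete, LeftFComplete, kStarSet_mirror, forall_mem_mirror, exists_mem_mirror,
    List.reverse_prefix]

theorem leftFComplete_mirror :
    LeftFComplete (mirror X) (mirror F) ↔ RightFComplete X F := by
  rw [← rightFComplete_mirror, mirror_mirror, mirror_mirror]

theorem FThin.mirror (h : FThin X F) : FThin (mirror X) (mirror F) := by
  simpa only [FThin, exists_mem_mirror, forall_mem_mirror, List.reverse_infix] using h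

theorem Factorial.mirror (hF : Factorial F) : Factorial (mirror F) :=
  fun u w hw huw => hF u.reverse w.reverse hw (List.reverse_infix.2 huw)

theorem Recurrent.mirror (hF : Recurrent F) : Recurrent (mirror F) := by
  obtain ⟨⟨hne, hfac, hpro⟩, hrec⟩ := hF
  refine ⟨⟨mirror_nonempty.2 hne, hfac.mirror, fun u hu => ?_⟩, fun u hu v hv => ?_⟩
  · obtain ⟨a, b, ha, hb⟩ := hpro _ hu
    exact ⟨b, a, by simpa using hb, by simpa using ha⟩
  · obtain ⟨w, hw⟩ := hrec _ hv _ hu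
    exact ⟨w.reverse, by simpa using hw⟩

end Mirror

section Completeness

variable {A : Type*} {X F : Set (List A)} {u w : List A}

theorem exists_not_prefixComparable (hF : Factorial F) (hX : ∀ x ∈ X, x ≠ [])
    (h : ¬RightFComplete X F) : ∃ u ∈ F, ¬PrefixComparable X u := by
  contrapose! h
  intro u hu
  obtain ⟨w, hw, p, rfl, x, hx, hpx⟩ := exists_kStarSet_append_of_prefixComparable hF hX h hu
  exact ⟨w ++ x, append_mem_kStarSet hw (mem_kStarSet_of_mem hx),
    (List.prefix_append_right_inj w).2 hpx⟩

theorem exists_not_suffixComparable (hF : Factorial F) (hX : ∀ x ∈ X, x ≠ [])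
    (h : ¬LeftFComplete X F) : ∃ u ∈ F, ¬SuffixComparable X u := by
  obtain ⟨u, hu, hinc⟩ := exists_not_prefixComparable hF.mirror
    (forall_mem_mirror.2 (by simpa using hX)) (rightFComplete_mirror.not.2 h)
  exact ⟨u.reverse, hu, fun h => hinc (by simpa using prefixComparable_mirror.2 h)⟩

theorem LeftFComplete.exists_append_kStarSet (h : LeftFComplete X F) (hF : Factorial F)
    (hne : X.Nonempty) (hX : ∀ x ∈ X, x ≠ []) (hu : u ∈ F) :
    ∃ s, ∃ w ∈ KStarSet X, u = s ++ w ∧ ∃ x ∈ X, s <:+ x := by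
  have hcomp : ∀ v ∈ mirror F, PrefixComparable (mirror X) v := fun v hv =>
    (rightFComplete_mirror.2 h).prefixComparable (mirror_nonempty.2 hne) hv
  obtain ⟨w, hw, p, hwp, x, hx, hpx⟩ := exists_kStarSet_append_of_prefixComparable hF.mirror
    (forall_mem_mirror.2 (by simpa using hX)) hcomp (u := u.reverse) (by simpa using hu)
  rw [kStarSet_mirror] at hw
  exact ⟨p.reverse, w.reverse, hw, by simpa using congrArg List.reverse hwp, x.reverse, hx,
    List.reverse_suffix.2 hpx⟩

theorem Recurrent.exists_seq_append_prefix (hF : Recurrent F) (hw : w ∈ F) (hu : u ∈ F) :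
    ∃ q : ℕ → List A, (∀ n, w <+: q n ∧ q n ++ u ∈ F) ∧ ∀ m n, m < n → q m ++ u <+: q n := by
  have extend : ∀ v ∈ F, ∃ q, v <+: q ∧ q ++ u ∈ F := fun v hv =>
    (hF.2 v hv u hu).imp' (v ++ ·) fun t ht => ⟨List.prefix_append v t, ht⟩
  choose! next hnext using extend
  let q : ℕ → List A := Nat.rec (next w) fun _ v => next (v ++ u)
  have hqF : ∀ n, q n ++ u ∈ F := fun n => by
    induction n with
    | zero => exact (hnext w hw).2
    | succ n ih => exact (hnext _ ih).2
  have hq : ∀ m n, m < n → q m ++ u <+: q n := fun m n hmn => by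
    induction n, hmn using Nat.le_induction with
    | base => exact (hnext _ (hqF m)).1
    | succ n _ ih => exact ih.trans ((List.prefix_append _ u).trans (hnext _ (hqF n)).1)
  refine ⟨q, fun n => ⟨?_, hqF n⟩, hq⟩
  rcases n.eq_zero_or_pos with rfl | hn
  · exact (hnext w hw).1
  · exact (hnext w hw).1.trans ((List.prefix_append _ u).trans (hq 0 n hn))

theorem LeftFComplete.rightFComplete (h : LeftFComplete X F) (hF : Recurrent F)
    (hX : PrefixCode X) (hthin : FThin X F) : RightFComplete X F := by
  by_contra hR
  have hfac : Factorial F := hF.1.2.1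
  obtain ⟨u, hu, hinc⟩ := exists_not_prefixComparable hfac hX.2.1 hR
  obtain ⟨w, hw, hwX⟩ := hthin
  obtain ⟨q, hq, hq_lt⟩ := hF.exists_seq_append_prefix hw hu
  have hqF : ∀ n, q n ∈ F := fun n => hfac _ _ (hq n).2 (List.prefix_append _ u).isInfix
  choose s x hx hqsx hs using fun n => h.exists_append_kStarSet hfac hX.1 hX.2.1 (hqF n)
  have hsw : ∀ n, s n ∈ {v | v ∈ w.inits} := fun n => by
    obtain ⟨y, hy, hsy⟩ := hs n
    have hsq : s n <+: q n := hqsx n ▸ List.prefix_append _ _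
    refine (List.mem_inits _ _).2 ((List.prefix_or_prefix_of_prefix hsq (hq n).1).resolve_right ?_)
    exact fun hws => hwX y hy (hws.isInfix.trans hsy.isInfix)
  obtain ⟨m, n, hmn, hsmn⟩ := Set.Finite.exists_lt_map_eq_of_forall_mem hsw w.inits.finite_toSet
  have hxu : x m ++ u <+: x n := by
    have := hq_lt m n hmn
    rwa [hqsx m, hqsx n, hsmn, List.append_assoc, List.prefix_append_right_inj] at this
  obtain ⟨t, ht⟩ := hxu
  have hut : u ++ t ∈ KStarSet X :=
    hX.mem_kStarSet_of_append_mem (hx m) (by rw [← List.append_assoc, ht]; exact hx n)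
  exact hinc ((prefixComparable_of_mem_kStarSet hX.1 hut).of_prefix (List.prefix_append u t))

theorem leftFComplete_iff_rightFComplete (hF : Recurrent F) (hX : BifixCode X)
    (hthin : FThin X F) : LeftFComplete X F ↔ RightFComplete X F :=
  ⟨fun h => h.rightFComplete hF hX.1 hthin, fun h => rightFComplete_mirror.1
    ((leftFComplete_mirror.2 h).rightFComplete hF.mirror hX.mirror.1 hthin.mirror)⟩

end Completeness

section Maximality

variable {A : Type*} {X F : Set (List A)} {u : List A}

theorem SuffixCode.insert (hX : SuffixCode X) (hu : ¬SuffixComparable X u) :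
    SuffixCode (insert u X) := by
  rw [← prefixCode_mirror, mirror_insert]
  exact (prefixCode_mirror.2 hX).insert (prefixComparable_mirror.not.2 hu)

theorem RightFComplete.fMaximalBifixCode (h : RightFComplete X F) (hXF : X ⊆ F)
    (hX : BifixCode X) : FMaximalBifixCode X F := by
  refine ⟨hX, hXF, fun Y hY hXY hYF => Set.Subset.antisymm (fun y hy => ?_) hXY⟩
  obtain ⟨x, hx, hxy | hyx⟩ := h.prefixComparable hX.1.1 (hYF hy)
  · rwa [← hY.1.2.2 x (hXY hx) y hy hxy]
  · rwa [hY.1.2.2 y hy x (hXY hx) hyx]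

theorem FMaximalBifixCode.leftFComplete_or_rightFComplete (h : FMaximalBifixCode X F)
    (hF : Recurrent F) : LeftFComplete X F ∨ RightFComplete X F := by
  obtain ⟨hX, hXF, hmax⟩ := h
  by_contra! ⟨hL, hR⟩
  obtain ⟨u, hu, hinc_u⟩ := exists_not_prefixComparable hF.1.2.1 hX.1.2.1 hR
  obtain ⟨v, hv, hinc_v⟩ := exists_not_suffixComparable hF.1.2.1 hX.1.2.1 hL
  obtain ⟨w, hw⟩ := hF.2 u hu v hv
  have hpre : ¬PrefixComparable X (u ++ w ++ v) := fun h =>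
    hinc_u (h.of_prefix ((List.prefix_append u w).trans (List.prefix_append _ v)))
  have hsuf : ¬SuffixComparable X (u ++ w ++ v) := fun h =>
    hinc_v (h.of_suffix (List.suffix_append _ v))
  have hins : insert (u ++ w ++ v) X = X :=
    hmax _ ⟨hX.1.insert hpre, hX.2.insert hsuf⟩ (Set.subset_insert _ _)
      (Set.insert_subset hw hXF)
  exact hpre ⟨_, Set.insert_eq_self.1 hins, Or.inl List.prefix_rfl⟩

end Maximality

section Rational

variable {A σ : Type*} {X F : Set (List A)} {M : DFA A σ} {r w t z : List A}

/-- The states that `M` reaches by reading a word ending with `w` and from which it can still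
accept. -/
def liveStates (M : DFA A σ) (w : List A) : Set σ :=
  {q | (∃ r, M.eval (r ++ w) = q) ∧ ∃ t, M.evalFrom q t ∈ M.accept}

theorem liveStates_append_subset (M : DFA A σ) (u v : List A) :
    liveStates M (u ++ v) ⊆
      (M.evalFrom · v) '' {q ∈ liveStates M u | ∃ t, M.evalFrom q (v ++ t) ∈ M.accept} := by
  rintro _ ⟨⟨r, rfl⟩, t, ht⟩
  rw [← List.append_assoc, DFA.eval, DFA.evalFrom_of_append _ _ _ v, ← DFA.evalFrom_of_append] at ht
  refine ⟨M.eval (r ++ u), ⟨⟨⟨r, rfl⟩, v ++ t, ht⟩, t, ht⟩, ?_⟩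
  rw [← List.append_assoc]
  exact (M.evalFrom_of_append M.start (r ++ u) v).symm

theorem PrefixCode.ncard_liveStates_lt [Finite σ] (hX : PrefixCode X)
    (hM : ∀ w, w ∈ M.accepts ↔ w ∈ X) (hx : r ++ w ++ t ∈ X) (hz : z ≠ []) :
    (liveStates M (w ++ (t ++ z))).ncard < (liveStates M w).ncard := by
  have haccept : ∀ v, M.evalFrom (M.eval (r ++ w)) v ∈ M.accept ↔ r ++ w ++ v ∈ X := fun v => by
    rw [← hM, DFA.mem_accepts]
    simp only [DFA.eval, DFA.evalFrom_of_append]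
  have hlive : M.eval (r ++ w) ∈ liveStates M w := ⟨⟨r, rfl⟩, t, (haccept t).2 hx⟩
  have hdead : ¬∃ v, M.evalFrom (M.eval (r ++ w)) (t ++ z ++ v) ∈ M.accept := by
    rintro ⟨v, hv⟩
    have hxv : r ++ w ++ t ++ (z ++ v) ∈ X := by simpa using (haccept _).1 hv
    have hnil := List.self_eq_append_right.1 (hX.2.2 _ hx _ hxv (List.prefix_append _ _))
    exact hz (List.append_eq_nil_iff.1 hnil).1
  calc (liveStates M (w ++ (t ++ z))).ncard
      ≤ {q ∈ liveStates M w | ∃ v, M.evalFrom q (t ++ z ++ v) ∈ M.accept}.ncard :=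
        (Set.ncard_le_ncard (liveStates_append_subset M w (t ++ z))).trans Set.ncard_image_le
    _ < (liveStates M w).ncard :=
        Set.ncard_lt_ncard ⟨Set.sep_subset _ _, fun h => hdead (h hlive).2⟩

theorem IsRational.fThin (hXrat : IsRational X) (hF : Recurrent F) (hXF : X ⊆ F)
    (hX : PrefixCode X) : FThin X F := by
  obtain ⟨σ, _, M, hM⟩ := hXrat
  obtain ⟨⟨hne, hfac, -⟩, hrec⟩ := hF
  obtain ⟨w, hw, hmin⟩ :=
    exists_minimalFor_of_wellFoundedLT (· ∈ F) (fun w => (liveStates M w).ncard) hne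
  refine ⟨w, hw, ?_⟩
  rintro x hx ⟨r, t, rfl⟩
  have hwt : w ++ t ∈ F := hfac _ _ (hXF hx) ⟨r, [], by simp⟩
  obtain ⟨v, hv⟩ := hrec _ hwt _ (hXF hx)
  have hz : v ++ (r ++ w ++ t) ≠ [] := List.append_ne_nil_of_right_ne_nil v (hX.2.1 _ hx)
  have hF' : w ++ (t ++ (v ++ (r ++ w ++ t))) ∈ F := by simpa using hv
  have hlt := hX.ncard_liveStates_lt hM hx hz
  exact hlt.not_ge (hmin hF' hlt.le)

end Rational

theorem rational_bifix_maximal_iff_complete_general {A : Type*} {F X : Set (List A)}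
    (hF : Recurrent F) (hXF : X ⊆ F) (hthin : FThin X F) (hX : BifixCode X) :
    (FMaximalBifixCode X F ↔ LeftFComplete X F) ∧
    (LeftFComplete X F ↔ RightFComplete X F) ∧
    (RightFComplete X F ↔ FComplete X F) := by
  have hLR := leftFComplete_iff_rightFComplete hF hX hthin
  have hMR : FMaximalBifixCode X F ↔ RightFComplete X F :=
    ⟨fun h => (h.leftFComplete_or_rightFComplete hF).elim hLR.1 id,
      fun h => h.fMaximalBifixCode hXF hX⟩
  exact ⟨hMR.trans hLR.symm, hLR, fun h => ⟨h, hLR.2 h⟩, And.left⟩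

/-- For a recurrent language `F` and a rational bifix code `X ⊆ F`,
the conditions `F`-maximal, left `F`-complete, right `F`-complete, and `F`-complete
are all equivalent. -/
theorem rational_bifix_maximal_iff_complete
    {A : Type*} [Fintype A] [Nonempty A] (F X : Set (List A))
    (hF : Recurrent F) (hXF : X ⊆ F) (hXrat : IsRational X) (hXbifix : BifixCode X) :
    (FMaximalBifixCode X F ↔ LeftFComplete X F) ∧
    (LeftFComplete X F ↔ RightFComplete X F) ∧
    (RightFComplete X F ↔ FComplete X F) :=
  rational_bifix_maximal_iff_complete_general hF hXF (hXrat.fThin hF hXF hXbifix.1) hXbifix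
end

section
/- Let A be a finite alphabet, let F ⊆ A* be a recurrent language, and let X be a rational F-complete bifix code (a rational bifix code contained in F that is both right F-complete and left F-complete). Then there exists a rational complete bifix code Z ⊆ A+ such that X = Z ∩ F. -/
/-!
The number of parses of words with respect to a bifix code `X` is a function `L` that grows by `0`
or `1` whenever a letter is added on the left or on the right, and that satisfies
`L u + L (a u b) ≤ L (a u) + L (u b)`. Conversely such an `L` determines `X`: the words of `X A*`
are those whose first letter does not increase `L`, and `X` consists of their minimal elements in
the prefix order. As the conditions on `L` are invariant under reversal, the code recovered from
any such `L` is bifix, and it is complete as soon as `L` is bounded.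

If `X` is rational and `F`-complete, the suffixes of a word of `F` that lie outside `X A*` lead to
distinct states in an automaton of `X`, so that `L` is bounded on `F` by some `d`. Truncating `L` at
`d` preserves the conditions and does not change `L` on `F`; the code of the truncated function is
`Z`.
-/

section ParseCounts

variable {A : Type*} {D F X : Set (List A)}

/-! ### Right and left ideals of words -/

/-- The right ideal `X A*` generated by a set of words `X`. -/
def rightIdeal (X : Set (List A)) : Set (List A) :=
  {w | ∃ x ∈ X, x <+: w}

/-- The left ideal `A* X` generated by a set of words `X`. -/
def leftIdeal (X : Set (List A)) : Set (List A) :=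
  {w | ∃ x ∈ X, x <:+ w}

/-- The set `X A⁺` of proper right multiples of words of `X`. -/
def properRightMultiples (X : Set (List A)) : Set (List A) :=
  {w | ∃ x ∈ X, x <+: w ∧ x ≠ w}

/-- The prefix base `D \ D A⁺` of `D`: the words of `D` that are minimal in the prefix order. -/
def prefixBase (D : Set (List A)) : Set (List A) :=
  D \ properRightMultiples D

theorem subset_rightIdeal : X ⊆ rightIdeal X :=
  fun x hx => ⟨x, hx, List.prefix_refl x⟩

theorem rightIdeal_eq_union : rightIdeal X = X ∪ properRightMultiples X := by
  ext w
  constructor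
  · rintro ⟨x, hx, hxw⟩
    by_cases h : x = w
    · exact .inl (h ▸ hx)
    · exact .inr ⟨x, hx, hxw, h⟩
  · rintro (hw | ⟨x, hx, hxw, -⟩)
    · exact subset_rightIdeal hw
    · exact ⟨x, hx, hxw⟩

theorem nil_mem_rightIdeal : [] ∈ rightIdeal X ↔ [] ∈ X := by
  simp [rightIdeal]

theorem append_singleton_mem_properRightMultiples {w : List A} {a : A} :
    w ++ [a] ∈ properRightMultiples X ↔ w ∈ rightIdeal X := by
  constructor
  · rintro ⟨x, hx, hxw, hne⟩
    exact ⟨x, hx, (List.prefix_concat_iff.1 hxw).resolve_left hne⟩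
  · rintro ⟨x, hx, hxw⟩
    refine ⟨x, hx, hxw.trans (List.prefix_append w [a]), ?_⟩
    rintro rfl
    simpa using hxw.length_le

theorem append_singleton_mem_rightIdeal {w : List A} {a : A} :
    w ++ [a] ∈ rightIdeal X ↔ w ++ [a] ∈ X ∨ w ∈ rightIdeal X := by
  rw [rightIdeal_eq_union, Set.mem_union, append_singleton_mem_properRightMultiples,
    rightIdeal_eq_union]

theorem cons_mem_leftIdeal {w : List A} {a : A} :
    a :: w ∈ leftIdeal X ↔ a :: w ∈ X ∨ w ∈ leftIdeal X := by
  simp only [leftIdeal, List.suffix_cons_iff, Set.mem_ofPred_eq, and_or_left, exists_or,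
    exists_eq_right]

theorem leftIdeal_eq_preimage_reverse :
    leftIdeal X = List.reverse ⁻¹' rightIdeal (List.reverse ⁻¹' X) := by
  ext w
  constructor
  · rintro ⟨x, hx, hxw⟩
    exact ⟨x.reverse, by simpa using hx, List.reverse_prefix.2 hxw⟩
  · rintro ⟨x, hx, hxw⟩
    exact ⟨x.reverse, hx, by simpa using List.reverse_suffix.2 hxw⟩

theorem exists_mem_prefixBase_prefix {w : List A} (hw : w ∈ D) :
    ∃ z ∈ prefixBase D, z <+: w := by
  induction hn : w.length using Nat.strong_induction_on generalizing w with
  | _ n ih =>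
    by_cases hmin : w ∈ properRightMultiples D
    · obtain ⟨u, hu, huw, hne⟩ := hmin
      have hlt : u.length < n :=
        hn ▸ huw.length_le.lt_of_ne fun h => hne (huw.eq_of_length h)
      obtain ⟨z, hz, hzu⟩ := ih _ hlt hu rfl
      exact ⟨z, hz, hzu.trans huw⟩
    · exact ⟨w, ⟨hw, hmin⟩, List.prefix_refl w⟩

theorem append_singleton_mem_prefixBase (hD : rightIdeal D ⊆ D) {w : List A} {a : A} :
    w ++ [a] ∈ prefixBase D ↔ w ++ [a] ∈ D ∧ w ∉ D := by
  rw [prefixBase, Set.mem_sdiff, append_singleton_mem_properRightMultiples,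
    hD.antisymm subset_rightIdeal]

theorem prefixBase_inter_of_factorial (hF : Factorial F) :
    prefixBase (D ∩ F) = prefixBase D ∩ F := by
  ext w
  constructor
  · rintro ⟨⟨hwD, hwF⟩, hmin⟩
    refine ⟨⟨hwD, ?_⟩, hwF⟩
    rintro ⟨u, hu, huw, hne⟩
    exact hmin ⟨u, ⟨hu, hF u w hwF huw.isInfix⟩, huw, hne⟩
  · rintro ⟨⟨hwD, hmin⟩, hwF⟩
    refine ⟨⟨hwD, hwF⟩, ?_⟩
    rintro ⟨u, hu, huw, hne⟩
    exact hmin ⟨u, hu.1, huw, hne⟩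

theorem prefixCode_prefixBase (hne : (prefixBase D).Nonempty) (hnil : [] ∉ D) :
    PrefixCode (prefixBase D) := by
  refine ⟨hne, fun x hx h => hnil (h ▸ hx.1), fun x hx y hy hxy => ?_⟩
  by_contra h
  exact hy.2 ⟨x, hx.1, hxy, h⟩

theorem PrefixCode.nil_notMem (hX : PrefixCode X) : [] ∉ X :=
  fun h => hX.2.1 [] h rfl

theorem PrefixCode.prefixBase_rightIdeal (hX : PrefixCode X) :
    prefixBase (rightIdeal X) = X := by
  ext w
  constructor
  · rintro ⟨⟨x, hx, hxw⟩, hmin⟩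
    by_contra hw
    exact hmin ⟨x, subset_rightIdeal hx, hxw, fun h => hw (h ▸ hx)⟩
  · refine fun hw => ⟨subset_rightIdeal hw, ?_⟩
    rintro ⟨u, ⟨x, hx, hxu⟩, huw, hne⟩
    obtain rfl := hX.2.2 x hx w hw (hxu.trans huw)
    exact hne (huw.eq_of_length_le hxu.length_le)

theorem PrefixCode.notMem_rightIdeal_of_append_singleton_mem (hX : PrefixCode X) {w : List A}
    {a : A} (hw : w ++ [a] ∈ X) : w ∉ rightIdeal X := by
  rw [← hX.prefixBase_rightIdeal] at hw
  exact fun h => hw.2 (append_singleton_mem_properRightMultiples.2 (subset_rightIdeal h))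

theorem SuffixCode.preimage_reverse (hX : SuffixCode X) : PrefixCode (List.reverse ⁻¹' X) := by
  obtain ⟨⟨x, hx⟩, hnil, hsuffix⟩ := hX
  refine ⟨⟨x.reverse, by simpa using hx⟩, ?_, fun u hu v hv huv => ?_⟩
  · rintro _ h rfl
    exact hnil [] h rfl
  · exact List.reverse_injective (hsuffix _ hu _ hv (List.reverse_suffix.2 huv))

theorem SuffixCode.notMem_leftIdeal_of_cons_mem (hX : SuffixCode X) {w : List A} {a : A}
    (hw : a :: w ∈ X) : w ∉ leftIdeal X := by
  rw [leftIdeal_eq_preimage_reverse]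
  exact hX.preimage_reverse.notMem_rightIdeal_of_append_singleton_mem (a := a) (by simpa using hw)

/-! ### Completeness -/

theorem rightFComplete_iff (hF : Factorial F) (hne : X.Nonempty) (hnil : [] ∉ X) :
    RightFComplete X F ↔ ∀ u ∈ F, u ∈ rightIdeal X ∨ ∃ x ∈ X, u <+: x := by
  constructor
  · intro hX u hu
    obtain ⟨_, ⟨l, hl, rfl⟩, hul⟩ := hX u hu
    rcases l with _ | ⟨x, l⟩
    · obtain ⟨y, hy⟩ := hne
      exact .inr ⟨y, hy, hul.trans List.nil_prefix⟩
    · have hx : x ∈ X := hl x List.mem_cons_self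
      have hxl : x <+: (x :: l).flatten := List.prefix_append x l.flatten
      exact (List.prefix_or_prefix_of_prefix hxl hul).imp (⟨x, hx, ·⟩) (⟨x, hx, ·⟩)
  · intro hX u hu
    induction hn : u.length using Nat.strong_induction_on generalizing u with
    | _ n ih =>
      rcases hX u hu with ⟨x, hx, t, rfl⟩ | ⟨x, hx, hux⟩
      · have hxpos : 0 < x.length := List.length_pos_iff.2 fun h => hnil (h ▸ hx)
        have ht : t ∈ F := hF t _ hu (List.suffix_append x t).isInfix
        obtain ⟨_, ⟨l, hl, rfl⟩, htl⟩ :=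
          ih t.length (by rw [← hn, List.length_append]; lia) t ht rfl
        exact ⟨_, ⟨x :: l, List.forall_mem_cons.2 ⟨hx, hl⟩, rfl⟩,
          (List.prefix_append_right_inj x).2 htl⟩
      · exact ⟨x, ⟨[x], by simpa using hx, by simp⟩, hux⟩

theorem leftFComplete_univ_of_preimage_reverse
    (hX : RightFComplete (List.reverse ⁻¹' X) Set.univ) : LeftFComplete X Set.univ := by
  intro u _
  obtain ⟨_, ⟨l, hl, rfl⟩, hul⟩ := hX u.reverse trivial
  refine ⟨l.flatten.reverse, ⟨(l.map List.reverse).reverse, fun x hx => ?_,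
    List.reverse_flatten⟩, ?_⟩
  · simpa using hl x.reverse (by simpa using hx)
  · simpa using List.reverse_suffix.2 hul

/-! ### Rational languages -/

theorem isRational_iff_isRegular {L : Set (List A)} :
    IsRational L ↔ Language.IsRegular (L : Language A) :=
  ⟨fun ⟨σ, hσ, M, hM⟩ => ⟨σ, hσ, M, Language.ext hM⟩,
    fun ⟨σ, hσ, M, hM⟩ => ⟨σ, hσ, M, fun _ => hM ▸ Iff.rfl⟩⟩

namespace IsRational

variable {K L : Set (List A)}

theorem univ : IsRational (Set.univ : Set (List A)) :=
  ⟨Unit, inferInstance, ⟨fun _ _ => (), (), Set.univ⟩, fun _ => Iff.rfl⟩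

theorem union (hK : IsRational K) (hL : IsRational L) : IsRational (K ∪ L) :=
  isRational_iff_isRegular.2 ((isRational_iff_isRegular.1 hK).add (isRational_iff_isRegular.1 hL))

theorem diff (hK : IsRational K) (hL : IsRational L) : IsRational (K \ L) :=
  isRational_iff_isRegular.2
    ((isRational_iff_isRegular.1 hK).inf (isRational_iff_isRegular.1 hL).compl)

theorem preimage_reverse (hL : IsRational L) : IsRational (List.reverse ⁻¹' L) :=
  isRational_iff_isRegular.2 (isRational_iff_isRegular.1 hL).reverse

theorem properRightMultiples (hL : IsRational L) : IsRational (properRightMultiples L) := by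
  obtain ⟨σ, _, M, hM⟩ := hL
  -- The second component remembers whether an accepting state has been left.
  let N : DFA A (σ × Prop) :=
    ⟨fun s a => (M.step s.1 a, s.1 ∈ M.accept ∨ s.2), (M.start, False), {s | s.2}⟩
  have hN : ∀ w, N.eval w = (M.eval w, w ∈ _root_.properRightMultiples L) := by
    intro w
    induction w using List.reverseRecOn with
    | nil => simp [N, _root_.properRightMultiples]
    | append_singleton w a ih =>
      have hw : w ∈ L ↔ M.eval w ∈ M.accept := (hM w).symm
      rw [DFA.eval_append_singleton, ih, DFA.eval_append_singleton,
        append_singleton_mem_properRightMultiples, rightIdeal_eq_union, Set.mem_union, hw]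
  exact ⟨σ × Prop, inferInstance, N, fun w => by rw [DFA.mem_accepts, hN]; rfl⟩

theorem rightIdeal (hL : IsRational L) : IsRational (rightIdeal L) :=
  rightIdeal_eq_union ▸ hL.union hL.properRightMultiples

theorem leftIdeal (hL : IsRational L) : IsRational (leftIdeal L) :=
  leftIdeal_eq_preimage_reverse ▸ hL.preimage_reverse.rightIdeal.preimage_reverse

theorem prefixBase (hL : IsRational L) : IsRational (prefixBase L) :=
  hL.diff hL.properRightMultiples

end IsRational

/-! ### Abstract parse counts and their codes -/

variable {L : List A → ℕ}

/-- The properties that characterize, up to the value at the empty word, the functions counting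
the parses of a word with respect to a bifix code (the *indicators* of bifix codes). -/
structure IsParseCount (L : List A → ℕ) : Prop where
  le_cons (a : A) (u : List A) : L u ≤ L (a :: u)
  cons_le (a : A) (u : List A) : L (a :: u) ≤ L u + 1
  le_append_singleton (u : List A) (b : A) : L u ≤ L (u ++ [b])
  append_singleton_le (u : List A) (b : A) : L (u ++ [b]) ≤ L u + 1
  submodular (a : A) (u : List A) (b : A) :
    L u + L (a :: (u ++ [b])) ≤ L (a :: u) + L (u ++ [b])

/-- The nonempty words whose first letter does not increase `L`. When `L` counts the parses with
respect to a bifix code `X`, these are the words of `X A*`. -/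
def stationaryWords (L : List A → ℕ) : Set (List A) :=
  {w | w ≠ [] ∧ L w = L w.tail}

/-- The bifix code with respect to which `L` counts the parses, when `IsParseCount L` holds and
`L [] = 1`. -/
def parseCode (L : List A → ℕ) : Set (List A) :=
  prefixBase (stationaryWords L)

theorem nil_notMem_stationaryWords : [] ∉ stationaryWords L :=
  fun h => h.1 rfl

theorem nil_notMem_parseCode : [] ∉ parseCode L :=
  fun h => nil_notMem_stationaryWords h.1

theorem cons_mem_stationaryWords {a : A} {u : List A} :
    a :: u ∈ stationaryWords L ↔ L (a :: u) = L u := by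
  simp [stationaryWords]

theorem parseCode_inter_congr {L' : List A → ℕ} (hF : Factorial F) (h : Set.EqOn L L' F) :
    parseCode L ∩ F = parseCode L' ∩ F := by
  have hstat : stationaryWords L ∩ F = stationaryWords L' ∩ F := by
    ext w
    refine and_congr_left fun hw => and_congr_right fun _ => ?_
    rw [h hw, h (hF _ w hw (List.tail_suffix w).isInfix)]
  simp only [parseCode, ← prefixBase_inter_of_factorial hF, hstat]

namespace IsParseCount

protected theorem reverse (hL : IsParseCount L) : IsParseCount (L ∘ List.reverse) where
  le_cons a u := by simpa using hL.le_append_singleton u.reverse a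
  cons_le a u := by simpa using hL.append_singleton_le u.reverse a
  le_append_singleton u b := by simpa using hL.le_cons b u.reverse
  append_singleton_le u b := by simpa using hL.cons_le b u.reverse
  submodular a u b := by simpa [add_comm] using hL.submodular b u.reverse a

theorem min_const (hL : IsParseCount L) (d : ℕ) : IsParseCount fun w => min (L w) d where
  le_cons a u := min_le_min_right d (hL.le_cons a u)
  cons_le a u := by have := hL.cons_le a u; lia
  le_append_singleton u b := min_le_min_right d (hL.le_append_singleton u b)
  append_singleton_le u b := by have := hL.append_singleton_le u b; lia
  submodular a u b := by
    have := hL.le_cons a u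
    have := hL.le_append_singleton u b
    have := hL.submodular a u b
    lia

theorem stationaryWords_min_const (hL : IsParseCount L) {d : ℕ} (hd : L [] ≤ d) :
    stationaryWords (fun w => min (L w) d) = stationaryWords L ∪ {w | d < L w} := by
  ext w
  rcases w with _ | ⟨a, u⟩
  · simp [stationaryWords, hd]
  · have := hL.le_cons a u
    have := hL.cons_le a u
    simp only [Set.mem_union, cons_mem_stationaryWords, Set.mem_ofPred_eq]
    lia

theorem le_append_left (hL : IsParseCount L) (u v : List A) : L v ≤ L (u ++ v) := by
  induction u with
  | nil => rfl
  | cons a u ih => exact ih.trans (hL.le_cons a (u ++ v))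

theorem le_append_right (hL : IsParseCount L) (u v : List A) : L u ≤ L (u ++ v) := by
  simpa using hL.reverse.le_append_left v.reverse u.reverse

theorem rightIdeal_stationaryWords_subset (hL : IsParseCount L) :
    rightIdeal (stationaryWords L) ⊆ stationaryWords L := by
  rintro _ ⟨w, hw, v, rfl⟩
  induction v using List.reverseRecOn with
  | nil => simpa using hw
  | append_singleton v b ih =>
    rw [← List.append_assoc]
    generalize w ++ v = u at ih
    rcases u with _ | ⟨a, u⟩
    · exact absurd ih nil_notMem_stationaryWords
    · rw [cons_mem_stationaryWords] at ih
      rw [List.cons_append, cons_mem_stationaryWords]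
      have := hL.submodular a u b
      have := hL.le_cons a (u ++ [b])
      lia

theorem singleton_mem_parseCode (hL : IsParseCount L) {a : A} :
    [a] ∈ parseCode L ↔ L [a] = L [] := by
  rw [parseCode, ← List.nil_append [a],
    append_singleton_mem_prefixBase hL.rightIdeal_stationaryWords_subset, List.nil_append,
    cons_mem_stationaryWords]
  exact and_iff_left nil_notMem_stationaryWords

theorem cons_append_singleton_mem_parseCode (hL : IsParseCount L) {a b : A} {u : List A} :
    a :: (u ++ [b]) ∈ parseCode L ↔ L (a :: (u ++ [b])) = L (u ++ [b]) ∧ L (a :: u) ≠ L u := by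
  rw [parseCode, ← List.cons_append,
    append_singleton_mem_prefixBase hL.rightIdeal_stationaryWords_subset, List.cons_append,
    cons_mem_stationaryWords, cons_mem_stationaryWords]

-- Either side says that `L (a u) = L (u b) = L (a u b) = L u + 1`.
theorem eq_tail_and_ne_iff_eq_dropLast_and_ne (hL : IsParseCount L) (a : A) (u : List A) (b : A) :
    L (a :: (u ++ [b])) = L (u ++ [b]) ∧ L (a :: u) ≠ L u ↔
      L (a :: (u ++ [b])) = L (a :: u) ∧ L (u ++ [b]) ≠ L u := by
  have := hL.le_cons a u
  have := hL.cons_le a u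
  have := hL.le_append_singleton u b
  have := hL.append_singleton_le u b
  have : L (a :: u) ≤ L (a :: (u ++ [b])) := hL.le_append_singleton (a :: u) b
  have := hL.le_cons a (u ++ [b])
  have := hL.submodular a u b
  lia

theorem parseCode_reverse (hL : IsParseCount L) :
    parseCode (L ∘ List.reverse) = List.reverse ⁻¹' parseCode L := by
  ext w
  rw [Set.mem_preimage]
  induction w using List.bidirectionalRec with
  | nil => exact iff_of_false nil_notMem_parseCode nil_notMem_parseCode
  | singleton a => simp [hL.singleton_mem_parseCode, hL.reverse.singleton_mem_parseCode]
  | cons_append a u b =>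
    have hrev : (a :: (u ++ [b])).reverse = b :: (u.reverse ++ [a]) := by simp
    rw [hL.reverse.cons_append_singleton_mem_parseCode, hrev,
      hL.cons_append_singleton_mem_parseCode, hL.eq_tail_and_ne_iff_eq_dropLast_and_ne]
    simp

theorem bifixCode_parseCode (hL : IsParseCount L) (hne : (parseCode L).Nonempty) :
    BifixCode (parseCode L) := by
  have hprefix {L : List A → ℕ} (hne : (parseCode L).Nonempty) : PrefixCode (parseCode L) :=
    prefixCode_prefixBase hne nil_notMem_stationaryWords
  have hreverse : PrefixCode (List.reverse ⁻¹' parseCode L) :=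
    hL.parseCode_reverse ▸ hprefix
      (hL.parseCode_reverse ▸ hne.preimage List.reverse_surjective)
  refine ⟨hprefix hne, hne, (hprefix hne).2.1, fun x hx y hy hxy => ?_⟩
  exact List.reverse_injective <|
    hreverse.2.2 _ (by simpa using hx) _ (by simpa using hy) (List.reverse_prefix.2 hxy)

theorem exists_append_mem_stationaryWords (hL : IsParseCount L) {d : ℕ} (hd : ∀ w, L w ≤ d)
    {u : List A} (hu : u ≠ []) : ∃ v, u ++ v ∈ stationaryWords L := by
  obtain ⟨a, u, rfl⟩ := List.exists_cons_of_ne_nil hu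
  by_contra! hstat
  have hlt : ∀ v, L v < L (a :: u ++ v) := fun v =>
    (hL.le_append_left u v).trans_lt <|
      (hL.le_cons a (u ++ v)).lt_of_ne' (mt cons_mem_stationaryWords.2 (hstat v))
  have hunbounded : ∀ n, ∃ v, n ≤ L v := by
    intro n
    induction n with
    | zero => exact ⟨[], Nat.zero_le _⟩
    | succ n ih =>
      obtain ⟨v, hv⟩ := ih
      exact ⟨a :: u ++ v, hv.trans_lt (hlt v)⟩
  obtain ⟨v, hv⟩ := hunbounded (d + 1)
  exact (hd v).not_gt hv

theorem rightFComplete_parseCode (hL : IsParseCount L) {d : ℕ} (hd : ∀ w, L w ≤ d)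
    (hne : (parseCode L).Nonempty) : RightFComplete (parseCode L) Set.univ := by
  refine (rightFComplete_iff (fun _ _ _ _ => trivial) hne nil_notMem_parseCode).2 fun u _ => ?_
  by_cases hu : u = []
  · obtain ⟨z, hz⟩ := hne
    exact .inr ⟨z, hz, hu ▸ List.nil_prefix⟩
  · obtain ⟨v, huv⟩ := hL.exists_append_mem_stationaryWords hd hu
    obtain ⟨z, hz, hzuv⟩ := exists_mem_prefixBase_prefix huv
    exact (List.prefix_or_prefix_of_prefix hzuv (List.prefix_append u v)).imp
      (⟨z, hz, ·⟩) (⟨z, hz, ·⟩)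

theorem fComplete_parseCode (hL : IsParseCount L) {d : ℕ} (hd : ∀ w, L w ≤ d)
    (hne : (parseCode L).Nonempty) : FComplete (parseCode L) Set.univ := by
  refine ⟨hL.rightFComplete_parseCode hd hne, leftFComplete_univ_of_preimage_reverse ?_⟩
  rw [← hL.parseCode_reverse]
  refine hL.reverse.rightFComplete_parseCode (fun w => hd w.reverse) ?_
  exact hL.parseCode_reverse ▸ hne.preimage List.reverse_surjective

end IsParseCount

/-! ### The number of parses with respect to a bifix code -/

open Classical in
/-- The number of suffixes of `w` outside `X A*`. When `X` is a bifix code, this is the number of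
parses of `w`, that is, of factorizations `w = v x u` with `x ∈ X*`, `v ∉ A* X` and `u ∉ X A*`:
as `X` is a suffix code, `u` determines the parse. -/
noncomputable def parseCount (X : Set (List A)) (w : List A) : ℕ :=
  w.tails.countP (· ∉ rightIdeal X)

theorem parseCount_nil (hnil : [] ∉ X) : parseCount X [] = 1 := by
  simp [parseCount, nil_mem_rightIdeal, hnil]

open Classical in
theorem parseCount_cons (a : A) (w : List A) :
    parseCount X (a :: w) = parseCount X w + if a :: w ∈ rightIdeal X then 0 else 1 := by
  simp [parseCount, List.countP_cons]

open Classical in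
theorem BifixCode.parseCount_append_singleton (hX : BifixCode X) (w : List A) (b : A) :
    parseCount X (w ++ [b]) = parseCount X w + if w ++ [b] ∈ leftIdeal X then 0 else 1 := by
  induction w with
  | nil =>
    have hiff : [b] ∈ rightIdeal X ↔ [b] ∈ leftIdeal X := by
      simp [rightIdeal, leftIdeal, List.prefix_cons_iff, List.suffix_cons_iff, or_comm]
    simp only [List.nil_append, parseCount_cons, hiff]
  | cons a w ih =>
    have hright : a :: (w ++ [b]) ∈ rightIdeal X ↔ a :: (w ++ [b]) ∈ X ∨ a :: w ∈ rightIdeal X :=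
      append_singleton_mem_rightIdeal (w := a :: w)
    simp only [List.cons_append, parseCount_cons, ih, hright, cons_mem_leftIdeal]
    by_cases hmem : a :: (w ++ [b]) ∈ X
    · have hprefix : a :: w ∉ rightIdeal X :=
        hX.1.notMem_rightIdeal_of_append_singleton_mem (w := a :: w) hmem
      have hsuffix : w ++ [b] ∉ leftIdeal X := hX.2.notMem_leftIdeal_of_cons_mem hmem
      simp [hmem, hprefix, hsuffix]
    · simp only [hmem, false_or, add_right_comm]

theorem BifixCode.isParseCount_parseCount (hX : BifixCode X) : IsParseCount (parseCount X) where
  le_cons a u := by rw [parseCount_cons]; lia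
  cons_le a u := by rw [parseCount_cons]; split_ifs <;> lia
  le_append_singleton u b := by rw [hX.parseCount_append_singleton]; lia
  append_singleton_le u b := by rw [hX.parseCount_append_singleton]; split_ifs <;> lia
  submodular a u b := by
    have hideal : a :: u ∈ rightIdeal X → a :: (u ++ [b]) ∈ rightIdeal X := fun h =>
      append_singleton_mem_rightIdeal.2 (.inr h)
    rw [parseCount_cons, parseCount_cons]
    split_ifs <;> grind

theorem stationaryWords_parseCount (hnil : [] ∉ X) :
    stationaryWords (parseCount X) = rightIdeal X := by
  ext w
  rcases w with _ | ⟨a, u⟩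
  · exact iff_of_false nil_notMem_stationaryWords (mt nil_mem_rightIdeal.1 hnil)
  · simp [cons_mem_stationaryWords, parseCount_cons]

theorem PrefixCode.parseCode_parseCount (hX : PrefixCode X) : parseCode (parseCount X) = X := by
  rw [parseCode, stationaryWords_parseCount hX.nil_notMem, hX.prefixBase_rightIdeal]

theorem BifixCode.setOf_succ_lt_parseCount (hX : BifixCode X) (d : ℕ) :
    {w | d + 1 < parseCount X w} =
      rightIdeal (properRightMultiples {w | d < parseCount X w} \ leftIdeal X) := by
  have hideal : rightIdeal {w | d < parseCount X w} = {w | d < parseCount X w} := by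
    refine subset_rightIdeal.antisymm' ?_
    rintro _ ⟨u, hu, v, rfl⟩
    exact lt_of_lt_of_le hu (hX.isParseCount_parseCount.le_append_right u v)
  ext w
  induction w using List.reverseRecOn with
  | nil =>
    simp [nil_mem_rightIdeal, parseCount_nil hX.1.nil_notMem, properRightMultiples]
  | append_singleton w b ih =>
    rw [append_singleton_mem_rightIdeal, ← ih, Set.mem_sdiff,
      append_singleton_mem_properRightMultiples, hideal]
    simp only [Set.mem_ofPred_eq, hX.parseCount_append_singleton]
    split_ifs <;> grind

theorem BifixCode.isRational_setOf_lt_parseCount (hX : BifixCode X) (hrat : IsRational X)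
    (d : ℕ) : IsRational {w | d < parseCount X w} := by
  induction d with
  | zero =>
    have hpos : ∀ w, 0 < parseCount X w := fun w => by
      have hle := hX.isParseCount_parseCount.le_append_left w []
      rwa [parseCount_nil hX.1.nil_notMem, List.append_nil] at hle
    simpa only [hpos, Set.ofPred_true] using IsRational.univ
  | succ d ih =>
    rw [hX.setOf_succ_lt_parseCount]
    exact (ih.properRightMultiples.diff hrat.leftIdeal).rightIdeal

theorem BifixCode.isRational_parseCode_min_parseCount (hX : BifixCode X) (hrat : IsRational X)
    {d : ℕ} (hd : 1 ≤ d) : IsRational (parseCode fun w => min (parseCount X w) d) := by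
  have hnil : parseCount X [] ≤ d := (parseCount_nil hX.1.nil_notMem).trans_le hd
  rw [parseCode, hX.isParseCount_parseCount.stationaryWords_min_const hnil,
    stationaryWords_parseCount hX.1.nil_notMem]
  exact (hrat.rightIdeal.union (hX.isRational_setOf_lt_parseCount hrat d)).prefixBase

theorem SuffixCode.eq_of_eval_eq {σ : Type*} {M : DFA A σ} (hX : SuffixCode X)
    (hM : ∀ w, w ∈ M.accepts ↔ w ∈ X) {s t : List A} (hst : s <:+ t)
    (ht : ∃ x ∈ X, t <+: x) (heval : M.eval s = M.eval t) : s = t := by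
  obtain ⟨_, hx, r, rfl⟩ := ht
  have hsr : s ++ r ∈ X := by
    rw [← hM, DFA.mem_accepts, DFA.eval, DFA.evalFrom_of_append] at hx ⊢
    exact (congrArg (M.evalFrom · r) heval).symm ▸ hx
  exact List.append_cancel_right (hX.2.2 _ hsr _ hx (List.suffix_append_self_iff.2 hst))

theorem nodup_tails (w : List A) : w.tails.Nodup := by
  induction w with
  | nil => simp
  | cons a w ih =>
    rw [List.tails_cons, List.nodup_cons, List.mem_tails]
    exact ⟨fun h => by simpa using h.length_le, ih⟩

theorem SuffixCode.parseCount_le_card {σ : Type*} [Fintype σ] {M : DFA A σ} (hX : SuffixCode X)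
    (hM : ∀ w, w ∈ M.accepts ↔ w ∈ X) {w : List A}
    (hw : ∀ s, s <:+ w → s ∈ rightIdeal X ∨ ∃ x ∈ X, s <+: x) :
    parseCount X w ≤ Fintype.card σ := by
  classical
  let parses := w.tails.filter (· ∉ rightIdeal X)
  have hparses : ∀ s ∈ parses, s <:+ w ∧ ∃ x ∈ X, s <+: x := fun s hs => by
    obtain ⟨hsw, hs⟩ : s <:+ w ∧ s ∉ rightIdeal X := by simpa [parses] using hs
    exact ⟨hsw, (hw s hsw).resolve_left hs⟩
  have hinj : ∀ s ∈ parses, ∀ t ∈ parses, M.eval s = M.eval t → s = t := by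
    intro s hs t ht heval
    obtain ⟨hsw, hsX⟩ := hparses s hs
    obtain ⟨htw, htX⟩ := hparses t ht
    rcases List.suffix_or_suffix_of_suffix hsw htw with hst | hts
    · exact hX.eq_of_eval_eq hM hst htX heval
    · exact (hX.eq_of_eval_eq hM hts hsX heval.symm).symm
  have hnodup : (parses.map M.eval).Nodup := ((nodup_tails w).filter _).map_on hinj
  calc parseCount X w = (parses.map M.eval).length := by
        rw [parseCount, List.countP_eq_length_filter, List.length_map]
    _ ≤ Fintype.card σ := hnodup.length_le_card

theorem SuffixCode.exists_parseCount_le (hX : SuffixCode X) (hrat : IsRational X)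
    (hF : Factorial F) (hcomp : RightFComplete X F) : ∃ d, ∀ w ∈ F, parseCount X w ≤ d := by
  obtain ⟨σ, _, M, hM⟩ := hrat
  refine ⟨Fintype.card σ, fun w hw => hX.parseCount_le_card hM fun s hs => ?_⟩
  exact (rightFComplete_iff hF hX.1 fun h => hX.2.1 [] h rfl).1 hcomp s (hF s w hw hs.isInfix)

end ParseCounts

theorem rational_F_complete_bifix_comes_from_complete_bifix_general
    {A : Type*} (F X : Set (List A)) (hF : Factorial F) (hXF : X ⊆ F) (hXrat : IsRational X)
    (hXbifix : BifixCode X) (hXcomp : RightFComplete X F) :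
    ∃ Z : Set (List A), IsRational Z ∧ BifixCode Z ∧ FComplete Z Set.univ ∧
      X = Z ∩ F := by
  obtain ⟨d, hd⟩ := hXbifix.2.exists_parseCount_le hXrat hF hXcomp
  let L : List A → ℕ := fun w => min (parseCount X w) d
  have hL : IsParseCount L := hXbifix.isParseCount_parseCount.min_const d
  have hXZ : X = parseCode L ∩ F := calc
    X = X ∩ F := (Set.inter_eq_left.2 hXF).symm
    _ = parseCode (parseCount X) ∩ F := by rw [hXbifix.1.parseCode_parseCount]
    _ = parseCode L ∩ F :=
      parseCode_inter_congr hF fun w hw => (min_eq_left (hd w hw)).symm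
  have hne : (parseCode L).Nonempty := (hXZ ▸ hXbifix.1.1).left
  have hd_pos : 1 ≤ d := by
    obtain ⟨x, hx⟩ := hXbifix.1.1
    simpa [parseCount_nil hXbifix.1.nil_notMem] using hd [] (hF [] x (hXF hx) List.nil_infix)
  exact ⟨parseCode L, hXbifix.isRational_parseCode_min_parseCount hXrat hd_pos,
    hL.bifixCode_parseCode hne, hL.fComplete_parseCode (fun w => min_le_right _ d) hne, hXZ⟩

/-- If `F` is recurrent and `X` is a rational `F`-complete bifix code,
then `X = Z ∩ F` for some rational complete bifix code `Z`. -/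
theorem rational_F_complete_bifix_comes_from_complete_bifix
    {A : Type*} [Fintype A] [Nonempty A] (F X : Set (List A))
    (hF : Recurrent F) (hXF : X ⊆ F) (hXrat : IsRational X)
    (hXbifix : BifixCode X) (hXcomp : FComplete X F) :
    ∃ Z : Set (List A), IsRational Z ∧ BifixCode Z ∧ FComplete Z Set.univ ∧
      X = Z ∩ F :=
  rational_F_complete_bifix_comes_from_complete_bifix_general F X hF.1.2.1 hXF hXrat hXbifix
    hXcomp.1
end
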